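/- Let G = (X,E) be a connected graph of finite geometry over a countably infinite vertex set X, with geodesic distance d. Let P be a sub-probability kernel on X with P(x,y) > 0 if and only if x ∼ y, and let V satisfy assumption (D) with base point x₀ and increasing profile W : ℕ₀ → (0,∞). Then for every r ∈ ℕ and every non-negative bounded function f which is (𝒰−I)-subharmonic in B_r(x₀)^c, one has f(x) ≤ ‖f‖_∞ ∏_{i=r}^{d(x,x₀)} 1/W(i) for all x with d(x,x₀) ≥ r. -/

import Mathlib

/-!
Let `ρ` be the distance to `x₀`, or any other function that decreases by at most one along each
transition of `P`. Where `ρ ≥ n`, the operator `𝒰` averages `f` over points with `ρ ≥ n - 1` and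
divides by `V ≥ W n`. A bound `f ≤ C` on `{ρ ≥ n - 1}` therefore improves to `f ≤ C / W n` on
`{ρ ≥ n}`; iterate this from the global bound `f ≤ M`, for `n = r, r + 1, …`. The bounds have to be
carried on the sets `{ρ ≥ n}` and not on the spheres `{ρ = n}`, because the average also sees
points with larger `ρ`.
-/

section WeightedSum

variable {ι : Type*} {p f : ι → ℝ} {C : ℝ}

theorem tsum_mul_le_tsum_mul_of_forall_pos (hp : ∀ i, 0 ≤ p i) (hp_sum : Summable p)
    (hpf : Summable fun i ↦ p i * f i) (hf : ∀ i, 0 < p i → f i ≤ C) :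
    ∑' i, p i * f i ≤ (∑' i, p i) * C := by
  have hterm : ∀ i, p i * f i ≤ p i * C := fun i ↦ by
    rcases (hp i).eq_or_lt with hzero | hpos
    · simp [← hzero]
    · exact mul_le_mul_of_nonneg_left (hf i hpos) (hp i)
  calc ∑' i, p i * f i ≤ ∑' i, p i * C := hpf.tsum_le_tsum hterm (hp_sum.mul_right C)
    _ = (∑' i, p i) * C := tsum_mul_right

theorem summable_mul_of_nonneg_of_le (hp : ∀ i, 0 ≤ p i) (hp_sum : Summable p)
    (hf : ∀ i, 0 ≤ f i) (hfC : ∀ i, f i ≤ C) : Summable fun i ↦ p i * f i :=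
  (hp_sum.mul_right C).of_nonneg_of_le (fun i ↦ mul_nonneg (hp i) (hf i))
    fun i ↦ mul_le_mul_of_nonneg_left (hfC i) (hp i)

end WeightedSum

section FeynmanKac

variable {X : Type*}

/-- A sub-probability kernel on the discrete space `X`, given by its matrix of transition weights.
Summability of the rows is a field of its own because `∑'` of a divergent row is `0`. -/
structure IsSubprobabilityKernel (P : X → X → ℝ) : Prop where
  nonneg : ∀ x y, 0 ≤ P x y
  summable : ∀ x, Summable (P x)
  tsum_le_one : ∀ x, ∑' y, P x y ≤ 1

/-- The Feynman–Kac operator `𝒰` with kernel `P` and potential `V`. -/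
noncomputable def feynmanKac (P : X → X → ℝ) (V f : X → ℝ) (x : X) : ℝ :=
  (1 / V x) * ∑' y, P x y * f y

/-- `f` is `(𝒰 - I)`-subharmonic in `D`, that is `𝒰 f - f ≥ 0` there. Summability is included so
that `𝒰 f` has a meaning on `D` for functions `f` of arbitrary sign. -/
def IsFeynmanKacSubharmonicOn (P : X → X → ℝ) (V f : X → ℝ) (D : Set X) : Prop :=
  ∀ x ∈ D, (Summable fun y ↦ P x y * f y) ∧ f x ≤ feynmanKac P V f x

variable {P : X → X → ℝ} {V f : X → ℝ}

theorem feynmanKac_le_mul_one_div (hP : IsSubprobabilityKernel P) {x : X} {w C : ℝ}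
    (hw : 0 < w) (hwV : w ≤ V x) (hC : 0 ≤ C) (hPf : Summable fun y ↦ P x y * f y)
    (hf : ∀ y, 0 < P x y → f y ≤ C) : feynmanKac P V f x ≤ C * (1 / w) := by
  have hmean : ∑' y, P x y * f y ≤ C :=
    calc ∑' y, P x y * f y ≤ (∑' y, P x y) * C :=
          tsum_mul_le_tsum_mul_of_forall_pos (hP.nonneg x) (hP.summable x) hPf hf
      _ ≤ C := mul_le_of_le_one_left hC (hP.tsum_le_one x)
  have hV : 0 < V x := hw.trans_le hwV
  calc (1 / V x) * ∑' y, P x y * f y ≤ (1 / V x) * C :=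
        mul_le_mul_of_nonneg_left hmean (one_div_pos.2 hV).le
    _ ≤ (1 / w) * C := mul_le_mul_of_nonneg_right (one_div_le_one_div_of_le hw hwV) hC
    _ = C * (1 / w) := mul_comm _ _

theorem IsFeynmanKacSubharmonicOn.mono {D E : Set X} (hf : IsFeynmanKacSubharmonicOn P V f E)
    (hDE : D ⊆ E) : IsFeynmanKacSubharmonicOn P V f D :=
  fun x hx ↦ hf x (hDE hx)

theorem IsFeynmanKacSubharmonicOn.le_mul_one_div {ρ : X → ℕ} {n : ℕ}
    (hf : IsFeynmanKacSubharmonicOn P V f {x | n ≤ ρ x}) (hP : IsSubprobabilityKernel P)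
    (hρ : ∀ x y, 0 < P x y → ρ x ≤ ρ y + 1) {w C : ℝ} (hw : 0 < w)
    (hwV : ∀ x, n ≤ ρ x → w ≤ V x) (hC : 0 ≤ C) (hfC : ∀ y, n ≤ ρ y + 1 → f y ≤ C)
    {x : X} (hx : n ≤ ρ x) : f x ≤ C * (1 / w) := by
  obtain ⟨hPf, hsub⟩ := hf x hx
  exact hsub.trans <| feynmanKac_le_mul_one_div hP hw (hwV x hx) hC hPf
    fun y hxy ↦ hfC y (hx.trans (hρ x y hxy))

end FeynmanKac

theorem dist_le_dist_add_one_of_adj {X : Type*} {G : SimpleGraph X} {x y : X} (x₀ : X)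
    (hxy : G.Adj x y) : G.dist x₀ x ≤ G.dist x₀ y + 1 := by
  have hdist := hxy.diff_dist_adj (u := x₀)
  lia

theorem stmt5_general {X : Type*} {P : X → X → ℝ} (hP : IsSubprobabilityKernel P)
    {ρ : X → ℕ} (hρ : ∀ x y, 0 < P x y → ρ x ≤ ρ y + 1)
    {W : ℕ → ℝ} {V : X → ℝ} {r n : ℕ} (hW_pos : ∀ k, r ≤ k → 0 < W k)
    (hWV : ∀ k x, r ≤ k → k ≤ ρ x → W k ≤ V x)
    {f : X → ℝ} {M : ℝ} (hM : 0 ≤ M) (hfM : ∀ x, f x ≤ M)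
    (hf : IsFeynmanKacSubharmonicOn P V f {x | r ≤ ρ x}) (hrn : r ≤ n) :
    ∀ x, n ≤ ρ x → f x ≤ M * ∏ i ∈ Finset.Icc r n, (1 / W i) := by
  induction n, hrn using Nat.le_induction with
  | base =>
    intro x hx
    simpa only [Finset.Icc_self, Finset.prod_singleton] using
      hf.le_mul_one_div hP hρ (hW_pos r le_rfl) (hWV r · le_rfl) hM (fun y _ ↦ hfM y) hx
  | succ n hrn ih =>
    intro x hx
    have hrn' : r ≤ n + 1 := hrn.trans n.le_succ
    have hbound : 0 ≤ M * ∏ i ∈ Finset.Icc r n, (1 / W i) :=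
      mul_nonneg hM <| Finset.prod_nonneg fun i hi ↦
        (one_div_pos.2 (hW_pos i (Finset.mem_Icc.1 hi).1)).le
    rw [Finset.prod_Icc_succ_top hrn', ← mul_assoc]
    exact (hf.mono fun _ ↦ hrn'.trans).le_mul_one_div hP hρ (hW_pos _ hrn') (hWV _ · hrn')
      hbound (fun y hy ↦ ih y (Nat.le_of_succ_le_succ hy)) hx

/-- (Theorem 2.8 of the paper.) Let `G = (X,E)` be a connected graph of finite
geometry over a countably infinite vertex set `X`, with geodesic distance `G.dist`. Let `P` be a
sub-probability kernel on `X` with `P x y > 0` iff `x ∼ y`, and let `V` satisfy assumption (D)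
with base point `x₀` and increasing profile `W : ℕ → (0,∞)`. Then for every `r ∈ ℕ` and every
non-negative bounded function `f` which is `(𝒰 - I)`-subharmonic in `B_r(x₀)ᶜ`, one has
`f x ≤ ‖f‖_∞ ∏_{i=r}^{d(x,x₀)} 1/W i` for all `x` with `d(x,x₀) ≥ r`. -/
theorem stmt5 {X : Type*} [Countable X] [Infinite X]
    (G : SimpleGraph X)
    (hfin : ∀ v : X, {y : X | G.Adj v y}.Finite)
    (hconn : G.Connected)
    (P : X → X → ℝ)
    (hP_nonneg : ∀ x y, 0 ≤ P x y)
    (hP_sum : ∀ x : X, Summable (P x))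
    (hP_sub : ∀ x : X, ∑' y, P x y ≤ 1)
    (hP_adj : ∀ x y, 0 < P x y ↔ G.Adj x y)
    (x₀ : X) (W : ℕ → ℝ) (hW_pos : ∀ n, 0 < W n) (hW_mono : Monotone W)
    (V : X → ℝ) (hV : ∀ x, V x = W (G.dist x₀ x))
    (r : ℕ) (hr : 0 < r)
    (f : X → ℝ) (hf_nonneg : ∀ x, 0 ≤ f x)
    (M : ℝ) (hfM : ∀ x, f x ≤ M)
    (hsub : ∀ x, r ≤ G.dist x₀ x → f x ≤ (1 / V x) * ∑' y, P x y * f y) :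
    ∀ x, r ≤ G.dist x₀ x →
      f x ≤ M * ∏ i ∈ Finset.Icc r (G.dist x₀ x), (1 / W i) := by
  have hlevel : ∀ x y, 0 < P x y → G.dist x₀ x ≤ G.dist x₀ y + 1 := fun x y hxy ↦
    dist_le_dist_add_one_of_adj x₀ ((hP_adj x y).1 hxy)
  have hWV : ∀ k x, r ≤ k → k ≤ G.dist x₀ x → W k ≤ V x := fun k x _ hk ↦
    (hW_mono hk).trans_eq (hV x).symm
  have hf : IsFeynmanKacSubharmonicOn P V f {x | r ≤ G.dist x₀ x} := fun x hx ↦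
    ⟨summable_mul_of_nonneg_of_le (hP_nonneg x) (hP_sum x) hf_nonneg hfM, hsub x hx⟩
  exact fun x hx ↦ stmt5_general ⟨hP_nonneg, hP_sum, hP_sub⟩ hlevel (fun k _ ↦ hW_pos k) hWV
    ((hf_nonneg x₀).trans (hfM x₀)) hfM hf hx x le_rfl
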